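/- arXiv:1909.06444 — 7 statements merged into one kernel-verified Lean document; each statement's English description precedes it below -/
import Mathlib

section
/- Let α > 0 and 0 < ε < 1/2, and let b be a positive integer satisfying b ≥ 3·(α + log₂|𝒳|)·(max_{a∈𝒳} 1/p(a))·(1/ε²)·log₂(1/ε). Then the probability that a b-tuple of i.i.d. p-distributed random variables fails to be ε-typical satisfies p^{⊗b}( 𝒳^b \ T_ε^b ) ≤ ε^α. -/
/-!
The proof is Chernoff's method with sharp constants, followed by a union bound over letters.

Write `N` for the number of occurrences of `a` in `x`, which is binomial with mean `b * p a`.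
Its generating function satisfies `E[r ^ N] = (1 + p a * (r - 1)) ^ b ≤ exp (b * p a * (r - 1))`
(`sum_prod_mul_pow_count_le`). Taking `r = 1 + ε` and `r = 1 - ε` bounds the upper and lower tail by
`exp (-b p(a) ((1 + ε) log (1 + ε) - ε))` and `exp (-b p(a) ((1 - ε) log (1 - ε) + ε))`. For
`ε ≤ 1/2` the two exponents are at least `(3/7) ε² b p(a)` (`upper_rate`) and `(1/2) ε² b p(a)`
(`lower_rate`).

With `t = log₂ |𝒳|` and `u = log₂ (1/ε) ≥ 1`, the hypothesis on `b` gives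
`ε² b p(a) ≥ 3 (α + t) u`, so the total failure probability is at most
`2 ^ t * (exp (-(9/7) (α + t) u) + exp (-(3/2) (α + t) u))`. Both `9/7` and `3/2` exceed `log 2`,
so a factor `2 ^ (-α u) = ε ^ α` splits off. For `t ≥ 1`, the rest is at most its value
`2 (exp (-9/7) + exp (-3/2)) ≤ 1` at `t = 1`. This is where the constants matter: the usual exponent
`ε² / 3` would be too weak for small alphabets. The remaining case `|𝒳| = 1` is trivial, since then
every sequence is typical.
-/

open Finset

/-- Empirical distribution of a `b`-tuple. -/
noncomputable def empDist {𝒳 : Type*} [Fintype 𝒳] [DecidableEq 𝒳] {b : ℕ}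
    (x : Fin b → 𝒳) (a : 𝒳) : ℝ :=
  ((Finset.univ.filter fun i => x i = a).card : ℝ) / b

/-- `x` is `ε`-typical with respect to `p`. -/
def IsTypical {𝒳 : Type*} [Fintype 𝒳] [DecidableEq 𝒳] (p : 𝒳 → ℝ) (ε : ℝ) {b : ℕ}
    (x : Fin b → 𝒳) : Prop :=
  ∀ a, |empDist x a - p a| ≤ ε * p a

/-- The exponent of the upper tail. The logarithm is bounded below by two terms of the series
`log ((1 + y) / (1 - y)) = 2 (y + y³/3 + ⋯)` at `y = x / (2 + x)`. -/
lemma upper_rate {x : ℝ} (h0 : 0 ≤ x) (h1 : x ≤ 1 / 2) :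
    3 / 7 * x ^ 2 ≤ (1 + x) * Real.log (1 + x) - x := by
  have h := Real.sum_range_le_log_div (x := x / (2 + x)) (by positivity)
    (by rw [div_lt_one (by positivity)]; linarith) 2
  have e : (1 + x / (2 + x)) / (1 - x / (2 + x)) = 1 + x := by
    have : (2 + x) ≠ 0 := by positivity
    have h2 : 1 - x / (2 + x) = 2 / (2 + x) := by field_simp; ring
    rw [h2]; field_simp; ring
  rw [e] at h
  norm_num [Finset.sum_range_succ] at h
  have h3 : x + 3 / 7 * x ^ 2 ≤ (1 + x) * (2 * (x / (2 + x) + (x / (2 + x)) ^ 3 / 3)) := by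
    have : (1 + x) * (2 * (x / (2 + x) + (x / (2 + x)) ^ 3 / 3)) - (x + 3 / 7 * x ^ 2)
        = x ^ 2 * (12 - 10 * x - 19 * x ^ 2 - 9 * x ^ 3) / (21 * (2 + x) ^ 3) := by
      have : (2 + x) ≠ 0 := by positivity
      field_simp; ring
    have h5 : 0 ≤ 12 - 10 * x - 19 * x ^ 2 - 9 * x ^ 3 := by
      have h6 : x ^ 2 ≤ 1 / 4 := by nlinarith
      have h7 : x ^ 3 ≤ 1 / 8 := by nlinarith
      linarith
    have : 0 ≤ x ^ 2 * (12 - 10 * x - 19 * x ^ 2 - 9 * x ^ 3) / (21 * (2 + x) ^ 3) := by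
      positivity
    linarith
  have h4 : (1 + x) * (2 * (x / (2 + x) + (x / (2 + x)) ^ 3 / 3)) ≤ (1 + x) * Real.log (1 + x) :=
    mul_le_mul_of_nonneg_left (by linarith) (by linarith)
  linarith

/-- The exponent of the lower tail, from `log z ≤ sinh (log z) = (z - z⁻¹) / 2` at
`z = (1 - x)⁻¹`. -/
lemma lower_rate {x : ℝ} (h0 : 0 ≤ x) (h1 : x < 1) :
    1 / 2 * x ^ 2 ≤ (1 - x) * Real.log (1 - x) + x := by
  have hx : 0 < 1 - x := by linarith
  have h := Real.self_le_sinh_iff.2 (Real.log_nonneg ((one_le_inv₀ hx).2 (by linarith)))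
  rw [Real.sinh_log (by positivity), Real.log_inv, inv_inv] at h
  have h2 := mul_le_mul_of_nonneg_left h hx.le
  have h3 : (1 - x) * (((1 - x)⁻¹ - (1 - x)) / 2) = (1 - (1 - x) ^ 2) / 2 := by
    field_simp
  rw [h3] at h2
  linarith

/-- Bound on the generating function of the number of occurrences of `a` in an i.i.d. tuple. -/
lemma sum_prod_mul_pow_count_le {𝒳 : Type*} [Fintype 𝒳] [DecidableEq 𝒳]
    (p : 𝒳 → ℝ) (hp : ∀ a, 0 < p a) (hsum : ∑ a, p a = 1) (a : 𝒳) (b : ℕ) {r : ℝ} (hr : 0 < r) :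
    ∑ x : Fin b → 𝒳, (∏ i, p (x i)) * r ^ (Finset.univ.filter fun i => x i = a).card
      ≤ Real.exp (b * (p a * (r - 1))) := by
  have h1 : ∀ x : Fin b → 𝒳, (∏ i, p (x i)) * r ^ (Finset.univ.filter fun i => x i = a).card
      = ∏ i, (p (x i) * if x i = a then r else 1) := by
    intro x
    rw [Finset.prod_mul_distrib]
    congr 1
    rw [Finset.prod_ite]
    simp
  have h2 : ∑ c, (p c * if c = a then r else 1) = 1 + p a * (r - 1) := by
    have : ∀ c, (p c * if c = a then r else 1) = p c + if c = a then p c * (r - 1) else 0 := by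
      intro c; split_ifs <;> ring
    simp [this, Finset.sum_add_distrib, hsum]
  simp_rw [h1]
  rw [← Fintype.sum_pow (fun c => p c * if c = a then r else 1) b, Real.exp_nat_mul]
  apply pow_le_pow_left₀
  · exact Finset.sum_nonneg fun c _ => mul_nonneg (hp c).le (by split_ifs <;> positivity)
  · rw [h2]
    linarith [Real.add_one_le_exp (p a * (r - 1))]

/-- The Chernoff bound with parameter `r`: the event `s ≤ N * log r` is dominated by the
weight `exp (-s) * r ^ N`. -/
lemma one_le_exp_mul_pow {r s : ℝ} (hr : 0 < r) (n : ℕ) (h : s ≤ n * Real.log r) :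
    1 ≤ Real.exp (-s) * r ^ n := by
  rw [← Real.exp_log (pow_pos hr n), Real.log_pow, ← Real.exp_add]
  exact Real.one_le_exp (by linarith)

/-- Union bound over letters and over the two tails. -/
lemma sum_not_typical_le {𝒳 : Type*} [Fintype 𝒳] [DecidableEq 𝒳]
    (p : 𝒳 → ℝ) (hp : ∀ a, 0 < p a) (hsum : ∑ a, p a = 1) {ε : ℝ} (hε : 0 < ε)
    (hε' : ε < 1 / 2) (b : ℕ) (hb : 0 < b) (s : Finset (Fin b → 𝒳))
    (hs : ∀ x ∈ s, ¬ IsTypical p ε x) :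
    ∑ x ∈ s, ∏ i, p (x i) ≤ ∑ a, (Real.exp (-(3 / 7 * (ε ^ 2 * (b * p a))))
      + Real.exp (-(1 / 2 * (ε ^ 2 * (b * p a))))) := by
  have hb' : (0 : ℝ) < b := by exact_mod_cast hb
  have h1ε : 0 < 1 - ε := by linarith
  have h1ε' : 0 < 1 + ε := by linarith
  let N : 𝒳 → (Fin b → 𝒳) → ℕ := fun a x => (Finset.univ.filter fun i => x i = a).card
  let U : 𝒳 → ℝ := fun a => b * p a * (1 + ε) * Real.log (1 + ε)
  let L : 𝒳 → ℝ := fun a => b * p a * (1 - ε) * Real.log (1 - ε)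
  let F : 𝒳 → (Fin b → 𝒳) → ℝ := fun a x =>
    Real.exp (-U a) * (1 + ε) ^ N a x + Real.exp (-L a) * (1 - ε) ^ N a x
  have hF0 : ∀ a x, 0 ≤ F a x := fun a x => by positivity
  have hw : ∀ x : Fin b → 𝒳, 0 ≤ ∏ i, p (x i) := fun x => Finset.prod_nonneg fun i _ => (hp _).le
  have hF1 : ∀ x ∈ s, 1 ≤ ∑ a, F a x := by
    intro x hx
    have := hs x hx
    simp only [IsTypical, not_forall, not_le] at this
    obtain ⟨a, ha⟩ := this
    refine le_trans ?_ (Finset.single_le_sum (fun a _ => hF0 a x) (Finset.mem_univ a))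
    have hN : empDist x a * b = N a x := by
      simp only [empDist, N]; field_simp
    rcases lt_abs.1 ha with h | h
    · have h2 : b * p a * (1 + ε) ≤ N a x := by
        rw [← hN]; nlinarith
      have h3 := one_le_exp_mul_pow (s := U a) h1ε' (N a x)
        (mul_le_mul_of_nonneg_right h2 (Real.log_nonneg (by linarith)))
      have : 0 ≤ Real.exp (-L a) * (1 - ε) ^ N a x := by positivity
      simp only [F]; linarith
    · have h2 : N a x ≤ b * p a * (1 - ε) := by
        rw [← hN]; nlinarith
      have h3 := one_le_exp_mul_pow (s := L a) h1ε (N a x)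
        (mul_le_mul_of_nonpos_right h2 (Real.log_nonpos h1ε.le (by linarith)))
      have : 0 ≤ Real.exp (-U a) * (1 + ε) ^ N a x := by positivity
      simp only [F]; linarith
  calc ∑ x ∈ s, ∏ i, p (x i) ≤ ∑ x ∈ s, (∏ i, p (x i)) * ∑ a, F a x :=
        Finset.sum_le_sum fun x hx => le_mul_of_one_le_right (hw x) (hF1 x hx)
    _ ≤ ∑ x, (∏ i, p (x i)) * ∑ a, F a x :=
        Finset.sum_le_sum_of_subset_of_nonneg (Finset.subset_univ s) fun x _ _ =>
          mul_nonneg (hw x) (Finset.sum_nonneg fun a _ => hF0 a x)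
    _ = ∑ a, (Real.exp (-U a) * (∑ x, (∏ i, p (x i)) * (1 + ε) ^ N a x)
          + Real.exp (-L a) * ∑ x, (∏ i, p (x i)) * (1 - ε) ^ N a x) := by
        simp_rw [Finset.mul_sum]
        rw [Finset.sum_comm]
        refine Finset.sum_congr rfl fun a _ => ?_
        rw [← Finset.sum_add_distrib]
        refine Finset.sum_congr rfl fun x _ => ?_
        simp only [F]; ring
    _ ≤ _ := by
        refine Finset.sum_le_sum fun a _ => ?_
        have hbp : 0 ≤ b * p a := (mul_pos hb' (hp a)).le
        refine add_le_add ?_ ?_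
        · refine (mul_le_mul_of_nonneg_left
            (sum_prod_mul_pow_count_le p hp hsum a b h1ε') (Real.exp_nonneg _)).trans ?_
          rw [← Real.exp_add, Real.exp_le_exp]
          have := mul_le_mul_of_nonneg_left (upper_rate hε.le hε'.le) hbp
          simp only [U]; nlinarith
        · refine (mul_le_mul_of_nonneg_left
            (sum_prod_mul_pow_count_le p hp hsum a b h1ε) (Real.exp_nonneg _)).trans ?_
          rw [← Real.exp_add, Real.exp_le_exp]
          have := mul_le_mul_of_nonneg_left (lower_rate hε.le (by linarith)) hbp
          simp only [L]; nlinarith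

/-- The numerical margin for a two-letter alphabet; the left side is about `0.9992`. -/
lemma two_mul_exp_add_exp_le : 2 * Real.exp (-(9 / 7)) + 2 * Real.exp (-(3 / 2)) ≤ 1 := by
  have h1 : (3.615 : ℝ) ≤ Real.exp (9 / 7) := by
    refine le_trans ?_ (Real.sum_le_exp_of_nonneg (by norm_num) 9)
    norm_num [Finset.sum_range_succ, Nat.factorial]
  have h2 : (4.48 : ℝ) ≤ Real.exp (3 / 2) := by
    refine le_trans ?_ (Real.sum_le_exp_of_nonneg (by norm_num) 9)
    norm_num [Finset.sum_range_succ, Nat.factorial]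
  rw [Real.exp_neg, Real.exp_neg]
  have h3 := inv_anti₀ (by norm_num) h1
  have h4 := inv_anti₀ (by norm_num) h2
  norm_num at h3 h4 ⊢
  linarith

/-- Each of the two tail bounds, summed over an alphabet of size `2 ^ t`, is at most its value at
`α = 0`, `t = u = 1`, times `2 ^ (-α u)`, which is `ε ^ α` for `u = log₂ (1/ε)`. -/
lemma tail_le {c α t u : ℝ} (hc : Real.log 2 ≤ c) (hα : 0 ≤ α) (ht : 1 ≤ t) (hu : 1 ≤ u) :
    Real.exp (t * Real.log 2) * Real.exp (-(c * ((α + t) * u)))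
      ≤ Real.exp (-(α * (u * Real.log 2))) * (2 * Real.exp (-c)) := by
  have hl : 0 < Real.log 2 := Real.log_pos (by norm_num)
  have h0 : 2 * Real.exp (-c) = Real.exp (Real.log 2 + -c) := by
    rw [Real.exp_add, Real.exp_log (by norm_num)]
  rw [h0, ← Real.exp_add, ← Real.exp_add, Real.exp_le_exp]
  have h1 : 0 ≤ (c - Real.log 2) * (α * u) := mul_nonneg (by linarith) (by positivity)
  have h2 : 0 ≤ (c - Real.log 2) * (t - 1) := mul_nonneg (by linarith) (by linarith)
  have h3 : 0 ≤ c * t * (u - 1) :=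
    mul_nonneg (mul_nonneg (by linarith) (by linarith)) (by linarith)
  nlinarith

open Classical in
theorem stmt0 {𝒳 : Type*} [Fintype 𝒳] [Nonempty 𝒳] [DecidableEq 𝒳]
    (p : 𝒳 → ℝ) (hp : ∀ a, 0 < p a) (hsum : ∑ a, p a = 1)
    (α ε : ℝ) (hα : 0 < α) (hε : 0 < ε) (hε' : ε < 1/2)
    (b : ℕ) (hb : 0 < b)
    (hbig : (b : ℝ) ≥ 3 * (α + Real.logb 2 (Fintype.card 𝒳)) *
      (Finset.univ.sup' Finset.univ_nonempty fun a => 1 / p a) *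
      (1 / ε ^ 2 * Real.logb 2 (1 / ε))) :
    ∑ x ∈ Finset.univ.filter (fun x : Fin b → 𝒳 => ¬ IsTypical p ε x), ∏ i, p (x i)
      ≤ ε ^ α := by
  have hb' : (0 : ℝ) < b := by exact_mod_cast hb
  have hl : 0 < Real.log 2 := Real.log_pos (by norm_num)
  rcases Nat.lt_or_ge 1 (Fintype.card 𝒳) with hk | hk
  · set t := Real.logb 2 (Fintype.card 𝒳) with ht_def
    set u := Real.logb 2 (1 / ε) with hu_def
    have hk' : (2 : ℝ) ≤ Fintype.card 𝒳 := by exact_mod_cast hk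
    have ht : 1 ≤ t := by
      rw [ht_def, Real.le_logb_iff_rpow_le (by norm_num) (by linarith)]; simpa using hk'
    have hu : 1 ≤ u := by
      rw [hu_def, Real.le_logb_iff_rpow_le (by norm_num) (by positivity), Real.rpow_one,
        le_div_iff₀ hε]
      linarith
    have hcard : (Fintype.card 𝒳 : ℝ) = Real.exp (t * Real.log 2) := by
      rw [ht_def, Real.logb, div_mul_cancel₀ _ hl.ne', Real.exp_log (by linarith)]
    have hεα : ε ^ α = Real.exp (-(α * (u * Real.log 2))) := by
      rw [hu_def, Real.logb, div_mul_cancel₀ _ hl.ne', Real.rpow_def_of_pos hε, one_div,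
        Real.log_inv]
      congr 1; ring
    have hkey : ∀ a, 3 * ((α + t) * u) ≤ ε ^ 2 * (b * p a) := by
      intro a
      have h1 : 1 / p a ≤ Finset.univ.sup' Finset.univ_nonempty fun a => 1 / p a :=
        Finset.le_sup' (fun a => 1 / p a) (Finset.mem_univ a)
      have h2 : 3 * (α + t) * (1 / p a) * (1 / ε ^ 2 * u) ≤ b :=
        le_trans (by gcongr) hbig
      have h3 := mul_le_mul_of_nonneg_right h2 (mul_pos (pow_pos hε 2) (hp a)).le
      have h4 : 3 * (α + t) * (1 / p a) * (1 / ε ^ 2 * u) * (ε ^ 2 * p a)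
          = 3 * ((α + t) * u) := by
        have := (hp a).ne'
        field_simp
      linarith
    have hl1 : Real.log 2 ≤ 1 := by linarith [Real.log_two_lt_d9]
    have T1 := tail_le (c := 9 / 7) (by linarith) hα.le ht hu
    have T2 := tail_le (c := 3 / 2) (by linarith) hα.le ht hu
    refine (sum_not_typical_le p hp hsum hε hε' b hb _
      (fun x hx => (Finset.mem_filter.1 hx).2)).trans ?_
    calc _ ≤ ∑ a : 𝒳, (Real.exp (-(9 / 7 * ((α + t) * u)))
            + Real.exp (-(3 / 2 * ((α + t) * u)))) := by
          refine Finset.sum_le_sum fun a _ => add_le_add ?_ ?_ <;>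
          · rw [Real.exp_le_exp]
            linarith [hkey a]
      _ = Real.exp (t * Real.log 2) * (Real.exp (-(9 / 7 * ((α + t) * u)))
            + Real.exp (-(3 / 2 * ((α + t) * u)))) := by
          rw [← hcard, Finset.sum_const, Finset.card_univ, nsmul_eq_mul]
      _ ≤ Real.exp (-(α * (u * Real.log 2)))
            * (2 * Real.exp (-(9 / 7)) + 2 * Real.exp (-(3 / 2))) := by
          rw [mul_add, mul_add]; exact add_le_add T1 T2
      _ ≤ ε ^ α := by
          rw [hεα]
          exact mul_le_of_le_one_right (Real.exp_nonneg _) two_mul_exp_add_exp_le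
  · have hsub : Subsingleton 𝒳 := Fintype.card_le_one_iff_subsingleton.1 hk
    have htyp : ∀ x : Fin b → 𝒳, IsTypical p ε x := by
      intro x a
      have hpa : p a = 1 := by rw [← hsum, Fintype.sum_subsingleton _ a]
      have hemp : empDist x a = 1 := by
        have : ∀ i, x i = a := fun i => Subsingleton.elim _ _
        simp [empDist, this, hb'.ne']
      rw [hpa, hemp]
      simpa using hε.le
    rw [Finset.filter_false_of_mem (fun x _ => not_not.2 (htyp x)), Finset.sum_empty]
    positivity
end

section
/- Let 0 < ε ≤ 1/2 and let b, k be positive integers with k = ε·b (so ε·b is an integer) and b ≥ (48/ε²)·log₂(2/ε). If δ, δ′ ∈ [0,1] satisfy δ ≤ ε⁴ and δ′ ≤ C(b,k)·δ^k, then δ′ ≤ (ε/2)⁴. -/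
/-!
Since `k = ε b`, the bounds `C(b,k) ≤ b ^ k / k!` and `k ^ k / k! ≤ exp k` give
`C(b,k) * ε ^ k ≤ exp k`. Hence `C(b,k) * δ ^ k ≤ C(b,k) * (ε ^ 4) ^ k ≤ (e * ε ^ 3) ^ k`, and
`e * ε ^ 3 ≤ ε` because `ε ^ 2 ≤ 1 / 4` and `e < 4`. The lower bound on `b` forces `k ≥ 8`, so
`δ' ≤ ε ^ k ≤ ε ^ 8 ≤ ε ^ 4 / 16`.
-/

theorem stmt3 (ε : ℝ) (hε : 0 < ε) (hε' : ε ≤ 1/2)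
    (b k : ℕ) (hb : 0 < b) (hk : 0 < k)
    (hkb : (k : ℝ) = ε * b)
    (hbig : (b : ℝ) ≥ 48 / ε ^ 2 * Real.logb 2 (2 / ε))
    (δ δ' : ℝ) (hδ0 : 0 ≤ δ) (hδ1 : δ ≤ 1) (hδ'0 : 0 ≤ δ') (hδ'1 : δ' ≤ 1)
    (hδ : δ ≤ ε ^ 4) (hrec : δ' ≤ (Nat.choose b k : ℝ) * δ ^ k) :
    δ' ≤ (ε / 2) ^ 4 := by
  have hlog : 1 ≤ Real.logb 2 (2 / ε) := by
    rw [Real.le_logb_iff_rpow_le (by norm_num) (by positivity), Real.rpow_one,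
      le_div_iff₀ hε]
    linarith
  have hk8 : 8 ≤ k := by
    have h1 : 48 / ε ^ 2 ≤ b :=
      (le_mul_of_one_le_right (by positivity) hlog).trans hbig
    rw [div_le_iff₀ (by positivity)] at h1
    have h2 : (8 : ℝ) ≤ k := by
      have h3 : (b : ℝ) * ε ^ 2 = k * ε := by rw [hkb]; ring
      have h4 : (k : ℝ) * ε ≤ k * (1 / 2) := by gcongr
      linarith
    exact_mod_cast h2
  have hchoose : (Nat.choose b k : ℝ) * ε ^ k ≤ 4 ^ k := calc
    (Nat.choose b k : ℝ) * ε ^ k ≤ (b : ℝ) ^ k / (k.factorial : ℝ) * ε ^ k := by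
      gcongr
      exact Nat.choose_le_pow_div k b
    _ = (k : ℝ) ^ k / (k.factorial : ℝ) := by
      rw [hkb, mul_pow]; ring
    _ ≤ Real.exp k := Real.pow_div_factorial_le_exp _ (by positivity) k
    _ = Real.exp 1 ^ k := by rw [← Real.exp_nat_mul, mul_one]
    _ ≤ 4 ^ k := by
      gcongr
      linarith [Real.exp_one_lt_d9]
  calc
    δ' ≤ (Nat.choose b k : ℝ) * δ ^ k := hrec
    _ ≤ (Nat.choose b k : ℝ) * (ε ^ 4) ^ k := by gcongr
    _ = ((Nat.choose b k : ℝ) * ε ^ k) * (ε ^ 3) ^ k := by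
      rw [mul_assoc, ← mul_pow]; ring
    _ ≤ 4 ^ k * (ε ^ 3) ^ k := by gcongr
    _ = (4 * ε ^ 3) ^ k := by rw [mul_pow]
    _ ≤ ε ^ k := by
      gcongr
      have h : ε ^ 2 ≤ (1 / 2) ^ 2 := by gcongr
      nlinarith
    _ ≤ ε ^ 8 := pow_le_pow_of_le_one hε.le (by linarith) hk8
    _ = ε ^ 4 * ε ^ 4 := by ring
    _ ≤ ε ^ 4 * (1 / 2) ^ 4 := by gcongr
    _ = (ε / 2) ^ 4 := by ring
end

section
/- Let 0 < ε ≤ 1/4 and let b, k be positive integers with k = ε·b (so ε·b is an integer), k ≥ 1, and b ≥ (48/ε²)·log₂(2/ε). If δ, δ′ ∈ [0,1] satisfy δ ≤ ε⁴ and δ′ ≤ C(b−1, k−1)·δ^{k−1}, then δ′ ≤ (ε/2)⁴. -/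
/-!
Since `logb 2 (2 / ε) ≥ 1`, the size hypothesis gives `k ≥ 48 / ε ≥ 192`, so with `m = k - 1` we
have `b - 1 ≤ 2 m / ε` and `m ≥ 4`. Hence `(b - 1) δ ≤ 2 m ε ^ 3 ≤ (ε / 8) m`. Combining
`C(b - 1, m) ≤ (b - 1) ^ m / m!` with `m ^ m / m! ≤ e ^ m` bounds the right-hand side of the
recursion by `(e ε / 8) ^ m ≤ (ε / 2) ^ m ≤ (ε / 2) ^ 4`.
-/

theorem stmt4 (ε : ℝ) (hε : 0 < ε) (hε' : ε ≤ 1/4)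
    (b k : ℕ) (hb : 0 < b) (hk : 1 ≤ k)
    (hkb : (k : ℝ) = ε * b)
    (hbig : (b : ℝ) ≥ 48 / ε ^ 2 * Real.logb 2 (2 / ε))
    (δ δ' : ℝ) (hδ0 : 0 ≤ δ) (hδ1 : δ ≤ 1) (hδ'0 : 0 ≤ δ') (hδ'1 : δ' ≤ 1)
    (hδ : δ ≤ ε ^ 4) (hrec : δ' ≤ (Nat.choose (b - 1) (k - 1) : ℝ) * δ ^ (k - 1)) :
    δ' ≤ (ε / 2) ^ 4 := by
  have hlog : 1 ≤ Real.logb 2 (2 / ε) := by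
    rw [Real.le_logb_iff_rpow_le (by norm_num) (by positivity), Real.rpow_one,
      le_div_iff₀ hε]
    linarith
  have hb48 : 48 / ε ^ 2 ≤ (b : ℝ) :=
    le_trans (le_mul_of_one_le_right (by positivity) hlog) hbig
  have hk5 : 5 ≤ k := by
    rw [div_le_iff₀ (by positivity), show (b : ℝ) * ε ^ 2 = k * ε by rw [hkb]; ring] at hb48
    have : (5 : ℝ) ≤ k := by
      nlinarith [mul_le_mul_of_nonneg_left hε' (Nat.cast_nonneg (α := ℝ) k)]
    exact_mod_cast this
  obtain ⟨m, rfl⟩ : ∃ m, k = m + 1 := ⟨k - 1, by omega⟩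
  obtain ⟨n, rfl⟩ : ∃ n, b = n + 1 := ⟨b - 1, by omega⟩
  simp only [Nat.add_sub_cancel] at hrec
  push_cast at hkb
  have hm : 4 ≤ m := by omega
  have hm' : (4 : ℝ) ≤ m := by exact_mod_cast hm
  have hn : (0 : ℝ) ≤ n := Nat.cast_nonneg n
  have hnδ : n * δ ≤ ε / 8 * m := by
    calc (n : ℝ) * δ ≤ n * ε ^ 4 := by gcongr
      _ = (ε * n) * ε ^ 3 := by ring
      _ ≤ (2 * m) * ε ^ 3 :=
          mul_le_mul_of_nonneg_right (by linarith) (by positivity)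
      _ = (2 * m) * ε * ε ^ 2 := by ring
      _ ≤ (2 * m) * ε * (1 / 4) ^ 2 := by gcongr
      _ = ε / 8 * m := by ring
  have hexp := Real.pow_div_factorial_le_exp (m : ℝ) (by positivity) m
  have he : Real.exp m = Real.exp 1 ^ m := by rw [← Real.exp_nat_mul, mul_one]
  have he3 : Real.exp 1 ≤ 4 := by linarith [Real.exp_one_lt_d9]
  calc δ' ≤ (n.choose m : ℝ) * δ ^ m := hrec
    _ ≤ (n ^ m / m.factorial) * δ ^ m := by
        gcongr
        exact Nat.choose_le_pow_div m n
    _ = (n * δ) ^ m / m.factorial := by rw [mul_pow]; ring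
    _ ≤ (ε / 8 * m) ^ m / m.factorial := by gcongr
    _ = (ε / 8) ^ m * (m ^ m / m.factorial) := by rw [mul_pow]; ring
    _ ≤ (ε / 8) ^ m * Real.exp 1 ^ m := by rw [← he]; gcongr
    _ ≤ (ε / 8) ^ m * 4 ^ m := by gcongr
    _ = (ε / 2) ^ m := by rw [← mul_pow]; ring
    _ ≤ (ε / 2) ^ 4 := pow_le_pow_of_le_one (by positivity) (by linarith) hm
end

section
/- For every integer b₀ ≥ 3, every real 0 < ε₀ < 1/2, and every integer L ≥ 1, one has b₀ + ∑_{i=1}^{L} (i+1) · b₀^{i+1} · 2^{i(i+1)} · (ε₀/2^i)^{3·b₀·2^{i−1}} < 2·b₀. -/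
/-!
Since `ε₀ < 1/2`, the `i`-th summand is at most `(i + 1) * (b₀ * 2 ^ i / 2 ^ (3 * b₀ * 2 ^ (i - 1))) ^ (i + 1)`.
The inner base is at most `1/4` (`four_mul_le_two_pow`), and `i + 1 ≤ 2 ^ i`, so the summand
is at most `(1/2) ^ i` (`term_le`). The geometric series then bounds the sum by `1 < b₀`.
-/

lemma four_mul_le_two_pow (b i : ℕ) (hb : 3 ≤ b) (hi : 1 ≤ i) :
    4 * (b * 2 ^ i) ≤ 2 ^ (3 * b * 2 ^ (i - 1)) := by
  have him : i ≤ 2 ^ (i - 1) := by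
    have := Nat.lt_two_pow_self (n := i - 1)
    omega
  generalize 2 ^ (i - 1) = m at him ⊢
  have hexp : 2 + b + i ≤ 3 * b * m := by nlinarith
  calc 4 * (b * 2 ^ i) ≤ 4 * (2 ^ b * 2 ^ i) := by
        gcongr
        exact Nat.lt_two_pow_self.le
    _ = 2 ^ (2 + b + i) := by ring
    _ ≤ 2 ^ (3 * b * m) := Nat.pow_le_pow_right (by norm_num) hexp

lemma term_le (b : ℕ) (hb : 3 ≤ b) (ε : ℝ) (hε : 0 < ε) (hε' : ε < 1 / 2)
    (i : ℕ) (hi : 1 ≤ i) :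
    ((i : ℝ) + 1) * (b : ℝ) ^ (i + 1) * 2 ^ (i * (i + 1)) *
      (ε / 2 ^ i) ^ (3 * b * 2 ^ (i - 1)) ≤ (1 / 2) ^ i := by
  have hN : 4 * ((b : ℝ) * 2 ^ i) ≤ 2 ^ (3 * b * 2 ^ (i - 1)) := by
    exact_mod_cast four_mul_le_two_pow b i hb hi
  generalize 3 * b * 2 ^ (i - 1) = N at hN ⊢
  have hbase : (b : ℝ) * 2 ^ i * (1 / 2) ^ N ≤ 1 / 4 := by
    rw [one_div_pow, mul_one_div, div_le_iff₀ (by positivity)]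
    linarith
  have hε2 : ε / 2 ^ i ≤ (1 / 2) ^ (i + 1) := by
    rw [pow_succ', one_div_pow, mul_one_div]
    gcongr
  have hlin : (i : ℝ) + 1 ≤ 2 ^ i := by
    exact_mod_cast Nat.lt_two_pow_self (n := i)
  calc _ ≤ ((i : ℝ) + 1) * (b : ℝ) ^ (i + 1) * 2 ^ (i * (i + 1)) *
        ((1 / 2) ^ (i + 1)) ^ N := by gcongr
    _ = ((i : ℝ) + 1) * ((b : ℝ) * 2 ^ i * (1 / 2) ^ N) ^ (i + 1) := by
        rw [mul_pow, mul_pow, ← pow_mul, ← pow_mul, ← pow_mul, mul_comm (i + 1) N]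
        ring
    _ ≤ 2 ^ i * (1 / 4) ^ (i + 1) := by gcongr
    _ = (1 / 2) ^ i * (1 / 4) := by rw [pow_succ, ← mul_assoc, ← mul_pow]; norm_num
    _ ≤ (1 / 2) ^ i := mul_le_of_le_one_right (by positivity) (by norm_num)

lemma sum_half_pow (L : ℕ) :
    ∑ i ∈ Finset.Icc 1 L, (1 / 2 : ℝ) ^ i = 1 - (1 / 2) ^ L := by
  induction L with
  | zero => simp
  | succ n ih => rw [Finset.sum_Icc_succ_top (by omega), ih]; ring

theorem stmt6 (b₀ : ℕ) (hb₀ : 3 ≤ b₀) (ε₀ : ℝ) (hε₀ : 0 < ε₀) (hε₀' : ε₀ < 1/2)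
    (L : ℕ) (hL : 1 ≤ L) :
    (b₀ : ℝ) + ∑ i ∈ Finset.Icc 1 L,
        ((i : ℝ) + 1) * (b₀ : ℝ) ^ (i + 1) * 2 ^ (i * (i + 1)) *
          (ε₀ / 2 ^ i) ^ (3 * b₀ * 2 ^ (i - 1))
      < 2 * b₀ := by
  have hsum := Finset.sum_le_sum fun i (hi : i ∈ Finset.Icc 1 L) =>
    term_le b₀ hb₀ ε₀ hε₀ hε₀' i (Finset.mem_Icc.1 hi).1
  rw [sum_half_pow] at hsum
  have hpos : (0 : ℝ) < (1 / 2) ^ L := by positivity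
  have hb : (3 : ℝ) ≤ b₀ := by exact_mod_cast hb₀
  linarith
end

section
/- Let p and q be probability mass functions on a finite alphabet 𝒳 with p(a) > 0 for all a ∈ 𝒳, and let 0 < ε < 1/2. If |p(a) − q(a)| ≤ ε·p(a) for all a ∈ 𝒳, then |H(p) − H(q)| ≤ (2 + max_{a∈𝒳} log₂(1/p(a)))·ε. -/
/-!
Write `H(p) - H(q) = D(q ‖ p) + ∑ (q - p) log p`. The second sum is at most `ε ∑ p log (1/p)` in
absolute value, hence at most `ε · max log (1/p)`. The divergence is nonnegative by
`log x ≥ 1 - 1/x`, and since `q/p ≤ 1 + ε` it is at most `log₂ (1 + ε) ≤ ε / ln 2 ≤ 2ε`.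
Both parts are bounded term by term, in natural logarithms, and then summed.
-/

open Finset

/-- Shannon entropy (base 2) of a pmf, with the convention `0 · log 0 = 0`
(note `Real.logb 2 0 = 0`). -/
noncomputable def shannonEntropy {𝒳 : Type*} [Fintype 𝒳] (r : 𝒳 → ℝ) : ℝ :=
  -∑ a, r a * Real.logb 2 (r a)

/-- The two-sided bound on a single term of `ln 2 · (H(p) - H(q))`. The parts `ε * y` and `y - x`
bound the divergence contribution `y log (y/x)`, and `ε * (x * m)` bounds `|(y - x) log x|`. -/
lemma entropy_term_bounds {x y ε m : ℝ} (hx : 0 < x) (hε : ε < 1) (hx1 : x ≤ 1)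
    (hε0 : 0 < ε) (h : |x - y| ≤ ε * x) (hm : -Real.log x ≤ m) :
    y * Real.log y - x * Real.log x ≤ ε * y + ε * (x * m) ∧
      (y - x) - ε * (x * m) ≤ y * Real.log y - x * Real.log x := by
  obtain ⟨h1, h2⟩ := abs_le.mp h
  have hy : 0 < y := by nlinarith
  have hl : Real.log x ≤ 0 := Real.log_nonpos hx.le hx1
  have hdiv : Real.log (y / x) = Real.log y - Real.log x := Real.log_div hy.ne' hx.ne'
  have hr : y / x ≤ 1 + ε := by
    rw [div_le_iff₀ hx]; linarith
  have hup : Real.log y - Real.log x ≤ ε := by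
    have := Real.log_le_sub_one_of_pos (div_pos hy hx)
    linarith
  have hlow : y - x ≤ y * (Real.log y - Real.log x) := by
    have := Real.one_sub_inv_le_log_of_pos (div_pos hy hx)
    rw [hdiv, inv_div] at this
    calc y - x = y * (1 - x / y) := by field_simp
      _ ≤ _ := mul_le_mul_of_nonneg_left this hy.le
  have hup' : y * (Real.log y - Real.log x) ≤ y * ε := mul_le_mul_of_nonneg_left hup hy.le
  have habs : |(y - x) * Real.log x| ≤ ε * (x * m) := by
    rw [abs_mul, abs_sub_comm, abs_of_nonpos hl, ← mul_assoc]
    exact mul_le_mul h hm (by linarith) (by positivity)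
  obtain ⟨h3, h4⟩ := abs_le.mp habs
  constructor <;> linarith

theorem stmt8 {𝒳 : Type*} [Fintype 𝒳] [Nonempty 𝒳]
    (p q : 𝒳 → ℝ) (hp : ∀ a, 0 < p a) (hq : ∀ a, 0 ≤ q a)
    (hpsum : ∑ a, p a = 1) (hqsum : ∑ a, q a = 1)
    (ε : ℝ) (hε : 0 < ε) (hε' : ε < 1/2)
    (hclose : ∀ a, |p a - q a| ≤ ε * p a) :
    |shannonEntropy p - shannonEntropy q|
      ≤ (2 + Finset.univ.sup' Finset.univ_nonempty fun a => Real.logb 2 (1 / p a)) * ε := by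
  set M := Finset.univ.sup' Finset.univ_nonempty fun a => Real.logb 2 (1 / p a) with hM
  have hL : 1 / 2 < Real.log 2 := by linarith [Real.log_two_gt_d9]
  have hL0 : 0 < Real.log 2 := by linarith
  have hm : ∀ a, -Real.log (p a) ≤ M * Real.log 2 := by
    intro a
    have h : Real.logb 2 (1 / p a) ≤ M :=
      Finset.le_sup' (fun a => Real.logb 2 (1 / p a)) (Finset.mem_univ a)
    rwa [Real.logb, div_le_iff₀ hL0, one_div, Real.log_inv] at h
  have hp1 : ∀ a, p a ≤ 1 := fun a =>
    hpsum ▸ Finset.single_le_sum (fun b _ => (hp b).le) (Finset.mem_univ a)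
  have hb := fun a => entropy_term_bounds (hp a) (by linarith) (hp1 a) hε (hclose a) (hm a)
  have hS : shannonEntropy p - shannonEntropy q =
      (∑ a, (q a * Real.log (q a) - p a * Real.log (p a))) / Real.log 2 := by
    simp only [shannonEntropy, Real.logb, mul_div_assoc', ← Finset.sum_div,
      Finset.sum_sub_distrib]
    ring
  have hU := Finset.sum_le_sum fun a (_ : a ∈ Finset.univ) => (hb a).1
  have hD := Finset.sum_le_sum fun a (_ : a ∈ Finset.univ) => (hb a).2
  rw [Finset.sum_add_distrib, ← Finset.mul_sum, ← Finset.mul_sum, ← Finset.sum_mul, hpsum,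
    hqsum] at hU
  rw [Finset.sum_sub_distrib, Finset.sum_sub_distrib, ← Finset.mul_sum, ← Finset.sum_mul, hpsum,
    hqsum] at hD
  rw [hS, abs_div, abs_of_pos hL0, div_le_iff₀ hL0, abs_le]
  constructor <;> nlinarith
end

section
/- Let α > 0, 0 < ε < 1/2, and let b, N be positive integers with b ≥ 3·(α + log₂|𝒳|)·(max_{a∈𝒳} 1/p(a))·(1/ε²)·log₂(1/ε). Let X^{Nb} be N·b i.i.d. p-distributed random variables, partitioned into N consecutive blocks of length b. Then the probability that at least one of the N blocks fails to be ε-typical is at most N·ε^α. -/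
/-!
A block fails to be typical only if the count of some letter `a` deviates from its mean `b * p a`
by more than `ε * b * p a`. The exponential Markov inequality (`chernoff`) bounds each of the two
tails by `exp (-(2/5) * ε² * b * p a)`, the constant `2/5` using `ε < 1/2` (`sum_deviates_le`).

The crude union bound over all `k = |𝒳|` letters is slightly too lossy for `k = 2`, so it is
taken only over a set `S` of letters that already decides typicality (`exists_deciding_set`):
no letter is needed when `k = 1`, one letter of least mass when `k = 2`, and all letters otherwise.
In each case `(2 * |S|)³ ≤ k⁵`, that is `2 * |S| ≤ k ^ (5/3)`. The lower bound on `b` makes each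
tail at most `exp (-(6/5) * (α + log₂ k) * log₂ (1/ε)) ≤ ε ^ α * k ^ (-5/3)`, since
`log 2 ≤ 18/25` (`tail_le`), so that a block is atypical with probability at most `ε ^ α`.
A union bound over the `N` blocks (`sum_exists_le`) concludes.
-/

open Finset

/-- Exponential Markov inequality for the number of occurrences of `a` among `b` independent
`p`-distributed letters; `0 < t` gives the upper tail at `c` and `t < 0` the lower tail. -/
lemma chernoff {𝒳 : Type*} [Fintype 𝒳] [DecidableEq 𝒳]
    (p : 𝒳 → ℝ) (hp : ∀ a, 0 < p a) (hsum : ∑ a, p a = 1) (b : ℕ) (a : 𝒳) (t c : ℝ)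
    (P : (Fin b → 𝒳) → Prop) [DecidablePred P]
    (hP : ∀ x, P x → t * c ≤ t * ((univ.filter fun i => x i = a).card : ℝ)) :
    ∑ x ∈ univ.filter P, ∏ i, p (x i) ≤ Real.exp (b * p a * (Real.exp t - 1) - t * c) := by
  have hmgf : ∑ a', p a' * Real.exp (if a' = a then t else 0) = 1 + p a * (Real.exp t - 1) := by
    have : ∀ a', p a' * Real.exp (if a' = a then t else 0)
        = p a' + if a' = a then p a * (Real.exp t - 1) else 0 := by
      intro a'
      split_ifs with h
      · subst h; ring
      · simp
    simp [this, sum_add_distrib, hsum]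
  have hexp : ∀ x : Fin b → 𝒳,
      Real.exp (t * ((univ.filter fun i => x i = a).card : ℝ))
        = ∏ i, Real.exp (if x i = a then t else 0) := by
    intro x
    rw [← Real.exp_sum, ← sum_filter, sum_const, nsmul_eq_mul, mul_comm]
  calc ∑ x ∈ univ.filter P, ∏ i, p (x i)
      ≤ ∑ x ∈ univ.filter P, Real.exp (-(t * c)) *
          ∏ i, (p (x i) * Real.exp (if x i = a then t else 0)) := by
        refine sum_le_sum fun x hx => ?_
        rw [prod_mul_distrib, ← hexp, mul_left_comm, ← Real.exp_add]
        refine le_mul_of_one_le_right (prod_nonneg fun i _ => (hp _).le) ?_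
        apply Real.one_le_exp
        linarith [hP x (mem_filter.1 hx).2]
    _ ≤ ∑ x : Fin b → 𝒳, Real.exp (-(t * c)) *
          ∏ i, (p (x i) * Real.exp (if x i = a then t else 0)) := by
        refine sum_le_sum_of_subset_of_nonneg (subset_univ _) fun x _ _ => ?_
        exact mul_nonneg (Real.exp_pos _).le
          (prod_nonneg fun i _ => mul_nonneg (hp _).le (Real.exp_pos _).le)
    _ = Real.exp (-(t * c)) * (1 + p a * (Real.exp t - 1)) ^ b := by
        rw [← mul_sum, ← hmgf]
        congr 1
        rw [← Fintype.piFinset_univ, ← Finset.prod_univ_sum (fun _ => univ)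
          (fun _ a' => p a' * Real.exp (if a' = a then t else 0))]
        simp
    _ ≤ Real.exp (-(t * c)) * Real.exp (p a * (Real.exp t - 1)) ^ b := by
        refine mul_le_mul_of_nonneg_left (pow_le_pow_left₀ ?_ ?_ b) (Real.exp_pos _).le
        · rw [← hmgf]
          exact sum_nonneg fun i _ => mul_nonneg (hp _).le (Real.exp_pos _).le
        · linarith [Real.add_one_le_exp (p a * (Real.exp t - 1))]
    _ = _ := by
        rw [← Real.exp_nat_mul, ← Real.exp_add]
        congr 1
        ring

/-- Two-sided tail bound for the relative deviation of the frequency of one letter. -/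
lemma sum_deviates_le {𝒳 : Type*} [Fintype 𝒳] [DecidableEq 𝒳]
    (p : 𝒳 → ℝ) (hp : ∀ a, 0 < p a) (hsum : ∑ a, p a = 1) (ε : ℝ) (hε : 0 < ε)
    (hε' : ε < 1/2) (b : ℕ) (hb : 0 < b) (a : 𝒳)
    (P : (Fin b → 𝒳) → Prop) [DecidablePred P]
    (hP : ∀ x, P x → ¬ |empDist x a - p a| ≤ ε * p a) :
    ∑ x ∈ univ.filter P, ∏ i, p (x i) ≤ 2 * Real.exp (-(2/5 * ε ^ 2 * (b * p a))) := by
  classical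
  have hb' : (0:ℝ) < b := by exact_mod_cast hb
  have hbp : 0 < b * p a := mul_pos hb' (hp a)
  have hsplit : ∀ x, P x →
      (1 + ε) * (b * p a) ≤ ((univ.filter fun i => x i = a).card : ℝ) ∨
      ((univ.filter fun i => x i = a).card : ℝ) ≤ (1 - ε) * (b * p a) := by
    intro x hx
    have h := hP x hx
    by_contra! hc
    apply h
    unfold empDist
    rw [abs_le]
    constructor
    · have : (1 - ε) * p a ≤ ((univ.filter fun i => x i = a).card : ℝ) / b := by
        rw [le_div_iff₀ hb']; linarith [hc.2]
      linarith
    · have : ((univ.filter fun i => x i = a).card : ℝ) / b ≤ (1 + ε) * p a := by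
        rw [div_le_iff₀ hb']; linarith [hc.1]
      linarith
  -- The optimal exponent for the upper tail is `t = log (1 + ε)`.
  have hup := chernoff p hp hsum b a (Real.log (1 + ε)) ((1 + ε) * (b * p a))
    (fun x => (1 + ε) * (b * p a) ≤ ((univ.filter fun i => x i = a).card : ℝ))
    (fun x hx => mul_le_mul_of_nonneg_left hx (Real.log_nonneg (by linarith)))
  have hlow := chernoff p hp hsum b a (-ε) ((1 - ε) * (b * p a))
    (fun x => ((univ.filter fun i => x i = a).card : ℝ) ≤ (1 - ε) * (b * p a))
    (fun x hx => mul_le_mul_of_nonpos_left hx (by linarith))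
  have hup' : Real.exp (b * p a * (Real.exp (Real.log (1 + ε)) - 1)
      - Real.log (1 + ε) * ((1 + ε) * (b * p a))) ≤ Real.exp (-(2/5 * ε ^ 2 * (b * p a))) := by
    rw [Real.exp_le_exp, Real.exp_log (by linarith)]
    have h1 := Real.le_log_one_add_of_nonneg hε.le
    have h2 : ε + 2/5 * ε ^ 2 ≤ 2 * ε / (ε + 2) * (1 + ε) := by
      have h : (0:ℝ) < ε + 2 := by linarith
      rw [div_mul_eq_mul_div (2 * ε) (ε + 2) (1 + ε), le_div_iff₀ h]
      nlinarith [pow_pos hε 2]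
    have h3 : ε + 2/5 * ε ^ 2 ≤ Real.log (1 + ε) * (1 + ε) :=
      h2.trans (mul_le_mul_of_nonneg_right h1 (by linarith))
    nlinarith [mul_le_mul_of_nonneg_right h3 hbp.le]
  have hlow' : Real.exp (b * p a * (Real.exp (-ε) - 1)
      - (-ε) * ((1 - ε) * (b * p a))) ≤ Real.exp (-(2/5 * ε ^ 2 * (b * p a))) := by
    rw [Real.exp_le_exp]
    have h1 : Real.exp (-ε) ≤ 1 - ε + ε ^ 2 / 2 := by
      rw [Real.exp_neg, inv_le_iff_one_le_mul₀ (Real.exp_pos _)]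
      have := Real.quadratic_le_exp_of_nonneg hε.le
      -- `(1 - ε + ε²/2) * (1 + ε + ε²/2) = 1 + ε⁴/4`
      nlinarith [mul_le_mul_of_nonneg_left this
        (by nlinarith [sq_nonneg ε] : 0 ≤ 1 - ε + ε ^ 2 / 2), sq_nonneg (ε ^ 2)]
    have h2 : Real.exp (-ε) - 1 + ε * (1 - ε) ≤ -(2/5 * ε ^ 2) := by
      nlinarith [sq_nonneg ε]
    nlinarith [mul_le_mul_of_nonneg_right h2 hbp.le]
  have hnn : ∀ x : Fin b → 𝒳, 0 ≤ ∏ i, p (x i) := fun x => prod_nonneg fun i _ => (hp _).le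
  have hunion : ∑ x ∈ univ.filter P, ∏ i, p (x i)
      ≤ (∑ x ∈ univ.filter (fun x : Fin b → 𝒳 =>
          (1 + ε) * (b * p a) ≤ ((univ.filter fun i => x i = a).card : ℝ)), ∏ i, p (x i))
        + ∑ x ∈ univ.filter (fun x : Fin b → 𝒳 =>
          ((univ.filter fun i => x i = a).card : ℝ) ≤ (1 - ε) * (b * p a)), ∏ i, p (x i) := by
    simp only [sum_filter]
    rw [← sum_add_distrib]
    refine sum_le_sum fun x _ => ?_
    have := hnn x
    by_cases hx : P x
    · rcases hsplit x hx with h | h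
      · rw [if_pos hx, if_pos h]; split_ifs <;> linarith
      · rw [if_pos hx, if_pos h]; split_ifs <;> linarith
    · rw [if_neg hx]; split_ifs <;> linarith
  linarith

/-- A set of letters whose frequencies decide typicality, small enough for the union bound. -/
lemma exists_deciding_set {𝒳 : Type*} [Fintype 𝒳] [Nonempty 𝒳] [DecidableEq 𝒳]
    (p : 𝒳 → ℝ) (hsum : ∑ a, p a = 1) (ε : ℝ) (hε : 0 < ε) (b : ℕ) (hb : 0 < b) :
    ∃ S : Finset 𝒳, (2 * S.card) ^ 3 ≤ Fintype.card 𝒳 ^ 5 ∧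
      ∀ x : Fin b → 𝒳, (∀ a ∈ S, |empDist x a - p a| ≤ ε * p a) → IsTypical p ε x := by
  have hb' : (b:ℝ) ≠ 0 := by exact_mod_cast hb.ne'
  have hemp : ∀ x : Fin b → 𝒳, ∑ a, empDist x a = 1 := by
    intro x
    unfold empDist
    rw [← sum_div, div_eq_one_iff_eq hb']
    have := card_eq_sum_card_fiberwise (f := x) (s := univ) (t := univ) (by simp)
    rw [card_univ, Fintype.card_fin] at this
    exact_mod_cast this.symm
  have hk : 0 < Fintype.card 𝒳 := Fintype.card_pos
  rcases (by omega : Fintype.card 𝒳 = 1 ∨ Fintype.card 𝒳 = 2 ∨ 3 ≤ Fintype.card 𝒳)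
    with h1 | h2 | h3
  · refine ⟨∅, by simp, fun x _ a => ?_⟩
    obtain ⟨c, hc⟩ := Fintype.card_eq_one_iff.1 h1
    have hu : (univ : Finset 𝒳) = {a} := by
      ext y; simp [hc y, hc a]
    have e1 := hemp x
    rw [hu, sum_singleton] at e1 hsum
    rw [e1, hsum]
    simp [hε.le]
  · obtain ⟨m, -, hm⟩ := exists_min_image univ p univ_nonempty
    refine ⟨{m}, by simp [h2], fun x hx a => ?_⟩
    have hx := hx m (mem_singleton_self m)
    by_cases ham : a = m
    · rw [ham]; exact hx
    · have hu : (univ : Finset 𝒳) = {a, m} := by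
        symm
        apply eq_univ_of_card
        rw [card_pair ham, h2]
      have e1 := hemp x
      rw [hu, sum_pair ham] at e1 hsum
      have : empDist x a - p a = -(empDist x m - p m) := by linarith
      rw [this, abs_neg]
      exact hx.trans (mul_le_mul_of_nonneg_left (hm a (mem_univ a)) hε.le)
  · refine ⟨univ, ?_, fun x hx a => hx a (mem_univ a)⟩
    rw [card_univ]
    have h9 : 8 ≤ Fintype.card 𝒳 ^ 2 := by nlinarith
    calc (2 * Fintype.card 𝒳) ^ 3 = 8 * Fintype.card 𝒳 ^ 3 := by ring
      _ ≤ Fintype.card 𝒳 ^ 2 * Fintype.card 𝒳 ^ 3 := Nat.mul_le_mul_right _ h9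
      _ = _ := by ring

/-- The numerical estimate: `s` letters with tails of exponent `E` cost at most `ε ^ α`. -/
lemma tail_le_s13 (k s : ℕ) (hk : 0 < k) (hs : (2 * s) ^ 3 ≤ k ^ 5) (α ε E : ℝ) (hα : 0 < α)
    (hε : 0 < ε) (hε' : ε < 1/2)
    (hE : 6/5 * ((α + Real.logb 2 k) * Real.logb 2 (1 / ε)) ≤ E) :
    (s : ℝ) * (2 * Real.exp (-E)) ≤ ε ^ α := by
  have hk' : (0:ℝ) < k := by exact_mod_cast hk
  have hlk : 0 ≤ Real.log k := Real.log_nonneg (by exact_mod_cast hk)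
  have hl2 : 0 < Real.log 2 := Real.log_pos (by norm_num)
  have hl2' : Real.log 2 ≤ 18/25 := by linarith [Real.log_two_lt_d9]
  set l := Real.log (1 / ε) with hl
  have hll : Real.log 2 ≤ l := by
    apply Real.log_le_log (by norm_num)
    rw [le_div_iff₀ hε]; linarith
  have hlε : Real.log ε = -l := by rw [hl, one_div, Real.log_inv]; ring
  have key : α * l + 5/3 * Real.log k ≤ E := by
    refine le_trans ?_ hE
    have hq : 1 ≤ l / Real.log 2 := by rwa [le_div_iff₀ hl2, one_mul]
    have hi : 25/18 ≤ 1 / Real.log 2 := by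
      rw [le_div_iff₀ hl2]; linarith
    have e : 6/5 * ((α + Real.logb 2 k) * Real.logb 2 (1 / ε))
        = 6/5 * (α * l) * (1 / Real.log 2)
          + 6/5 * Real.log k * (1 / Real.log 2) * (l / Real.log 2) := by
      unfold Real.logb
      rw [← hl]
      field_simp
    rw [e]
    have hal : 0 ≤ α * l := by nlinarith
    have h1 : 6/5 * (α * l) * (25/18) ≤ 6/5 * (α * l) * (1 / Real.log 2) :=
      mul_le_mul_of_nonneg_left hi (by linarith)
    have h2 : 6/5 * Real.log k * (25/18) ≤ 6/5 * Real.log k * (1 / Real.log 2) :=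
      mul_le_mul_of_nonneg_left hi (by linarith)
    have h3 : 6/5 * Real.log k * (1 / Real.log 2)
        ≤ 6/5 * Real.log k * (1 / Real.log 2) * (l / Real.log 2) :=
      le_mul_of_one_le_right (by positivity) hq
    linarith
  have hs' : (2 * s : ℝ) ≤ Real.exp (5/3 * Real.log k) := by
    refine le_of_pow_le_pow_left₀ (n := 3) (by norm_num) (Real.exp_pos _).le ?_
    rw [← Real.exp_nat_mul]
    have : ((3:ℕ):ℝ) * (5/3 * Real.log k) = (5:ℕ) * Real.log k := by push_cast; ring
    rw [this, Real.exp_nat_mul, Real.exp_log hk']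
    exact_mod_cast hs
  calc (s : ℝ) * (2 * Real.exp (-E)) = 2 * s * Real.exp (-E) := by ring
    _ ≤ Real.exp (5/3 * Real.log k) * Real.exp (-(α * l + 5/3 * Real.log k)) :=
        mul_le_mul hs' (Real.exp_le_exp.2 (by linarith)) (Real.exp_pos _).le (Real.exp_pos _).le
    _ = ε ^ α := by
        rw [← Real.exp_add, Real.rpow_def_of_pos hε, hlε]
        congr 1
        ring

/-- Union bound over the coordinates of an `N`-fold product of a finite probability space. -/
lemma sum_exists_le {Y : Type*} [Fintype Y] (w : Y → ℝ) (hw : ∀ y, 0 ≤ w y)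
    (hsum : ∑ y, w y = 1) (N : ℕ) (B : Y → Prop) [DecidablePred B]
    (P : (Fin N → Y) → Prop) [DecidablePred P] (hP : ∀ x, P x → ∃ j, B (x j)) :
    ∑ x ∈ univ.filter P, ∏ j, w (x j) ≤ N * ∑ y ∈ univ.filter B, w y := by
  classical
  have hnn : ∀ x : Fin N → Y, 0 ≤ ∏ j, w (x j) := fun x => prod_nonneg fun i _ => hw _
  have hmarg : ∀ j : Fin N, ∑ x : Fin N → Y, (if B (x j) then ∏ i, w (x i) else 0)
      = ∑ y ∈ univ.filter B, w y := by
    intro j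
    -- The indicator of `B (x j)` is absorbed into the `j`-th factor of the product.
    have h : ∀ x : Fin N → Y, (if B (x j) then ∏ i, w (x i) else 0)
        = ∏ i, (if i = j then (if B (x i) then w (x i) else 0) else w (x i)) := by
      intro x
      rw [← mul_prod_erase univ (fun i => w (x i)) (mem_univ j), ← mul_prod_erase univ
        (fun i => if i = j then (if B (x i) then w (x i) else 0) else w (x i)) (mem_univ j),
        if_pos rfl]
      rw [prod_congr rfl (g := fun i => w (x i))
        (fun i hi => if_neg (ne_of_mem_erase hi))]
      split_ifs <;> simp
    simp_rw [h]
    rw [← Fintype.piFinset_univ, ← Finset.prod_univ_sum (fun _ => univ)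
      (fun i y => if i = j then (if B y then w y else 0) else w y),
      ← mul_prod_erase univ _ (mem_univ j)]
    rw [prod_eq_one fun i hi => by simp [ne_of_mem_erase hi, hsum]]
    simp [sum_filter]
  calc ∑ x ∈ univ.filter P, ∏ j, w (x j)
      ≤ ∑ x : Fin N → Y, ∑ j, (if B (x j) then ∏ i, w (x i) else 0) := by
        rw [sum_filter]
        refine sum_le_sum fun x _ => ?_
        have hterm : ∀ j ∈ (univ : Finset (Fin N)),
            0 ≤ (if B (x j) then ∏ i, w (x i) else 0) := fun j _ => by
          split_ifs
          exacts [hnn x, le_rfl]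
        split_ifs with hx
        · obtain ⟨j, hj⟩ := hP x hx
          have := single_le_sum hterm (mem_univ j)
          rwa [if_pos hj] at this
        · exact sum_nonneg hterm
    _ = N * ∑ y ∈ univ.filter B, w y := by
        rw [sum_comm]
        simp [hmarg]

open Classical in
theorem stmt13 {𝒳 : Type*} [Fintype 𝒳] [Nonempty 𝒳] [DecidableEq 𝒳]
    (p : 𝒳 → ℝ) (hp : ∀ a, 0 < p a) (hsum : ∑ a, p a = 1)
    (α ε : ℝ) (hα : 0 < α) (hε : 0 < ε) (hε' : ε < 1/2)
    (b N : ℕ) (hb : 0 < b) (hN : 0 < N)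
    (hbig : (b : ℝ) ≥ 3 * (α + Real.logb 2 (Fintype.card 𝒳)) *
      (Finset.univ.sup' Finset.univ_nonempty fun a => 1 / p a) *
      (1 / ε ^ 2 * Real.logb 2 (1 / ε))) :
    ∑ x ∈ Finset.univ.filter
        (fun x : Fin N → Fin b → 𝒳 => ∃ j, ¬ IsTypical p ε (x j)),
      ∏ j, ∏ i, p (x j i) ≤ (N : ℝ) * ε ^ α := by
  have hw : ∀ y : Fin b → 𝒳, 0 ≤ ∏ i, p (y i) := fun y => prod_nonneg fun i _ => (hp _).le
  have hw1 : ∑ y : Fin b → 𝒳, ∏ i, p (y i) = 1 := by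
    rw [← Fintype.piFinset_univ, ← Finset.prod_univ_sum]
    simp [hsum]
  refine (sum_exists_le (fun y : Fin b → 𝒳 => ∏ i, p (y i)) hw hw1 N
    (fun y => ¬ IsTypical p ε y) _ (fun x hx => hx)).trans ?_
  refine mul_le_mul_of_nonneg_left ?_ (Nat.cast_nonneg N)
  obtain ⟨S, hS, hdec⟩ := exists_deciding_set p hsum ε hε b hb
  have hA : 0 ≤ α + Real.logb 2 (Fintype.card 𝒳) :=
    add_nonneg hα.le (Real.logb_nonneg (by norm_num) (by exact_mod_cast Fintype.card_pos))
  have hL : 0 ≤ Real.logb 2 (1 / ε) :=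
    Real.logb_nonneg (by norm_num) (by rw [le_div_iff₀ hε]; linarith)
  set M := Finset.univ.sup' Finset.univ_nonempty fun a => 1 / p a with hM
  set A := α + Real.logb 2 (Fintype.card 𝒳) with hA'
  set L := Real.logb 2 (1 / ε)
  have hletter : ∀ a, 6/5 * (A * L) ≤ 2/5 * ε ^ 2 * (b * p a) := by
    intro a
    have hMp : 1 ≤ M * p a := by
      rw [← div_le_iff₀ (hp a)]
      exact Finset.le_sup' (fun a => 1 / p a) (mem_univ a)
    have h1 : 2/5 * (ε ^ 2 * p a) * (3 * A * M * (1 / ε ^ 2 * L))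
        ≤ 2/5 * (ε ^ 2 * p a) * b :=
      mul_le_mul_of_nonneg_left hbig (by have := hp a; positivity)
    have h2 : 2/5 * (ε ^ 2 * p a) * (3 * A * M * (1 / ε ^ 2 * L))
        = 6/5 * (A * L) * (M * p a) := by
      field_simp
      ring
    have h3 : 6/5 * (A * L) ≤ 6/5 * (A * L) * (M * p a) :=
      le_mul_of_one_le_right (by positivity) hMp
    linarith
  calc ∑ y ∈ univ.filter (fun y : Fin b → 𝒳 => ¬ IsTypical p ε y), ∏ i, p (y i)
      ≤ ∑ a ∈ S, ∑ y ∈ univ.filter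
          (fun y : Fin b → 𝒳 => ¬ |empDist y a - p a| ≤ ε * p a), ∏ i, p (y i) := by
        simp only [sum_filter]
        rw [sum_comm]
        refine sum_le_sum fun y _ => ?_
        have hterm : ∀ a ∈ S,
            0 ≤ (if ¬ |empDist y a - p a| ≤ ε * p a then ∏ i, p (y i) else 0) := fun a _ => by
          split_ifs
          exacts [le_rfl, hw y]
        by_cases hy : IsTypical p ε y
        · rw [if_neg (not_not.2 hy)]
          exact sum_nonneg hterm
        · rw [if_pos hy]
          have : ∃ a ∈ S, ¬ |empDist y a - p a| ≤ ε * p a := by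
            by_contra! h
            exact hy (hdec y h)
          obtain ⟨a, ha, hya⟩ := this
          have h := single_le_sum hterm ha
          rwa [if_pos hya] at h
    _ ≤ ∑ a ∈ S, 2 * Real.exp (-(6/5 * (A * L))) := by
        refine sum_le_sum fun a _ => ?_
        refine (sum_deviates_le p hp hsum ε hε hε' b hb a _ (fun x hx => hx)).trans ?_
        have := Real.exp_le_exp.2 (neg_le_neg (hletter a))
        linarith
    _ = S.card * (2 * Real.exp (-(6/5 * (A * L)))) := by
        rw [sum_const, nsmul_eq_mul]
    _ ≤ ε ^ α := tail_le_s13 _ _ Fintype.card_pos hS α ε _ hα hε hε' le_rfl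
end

section
/- Let 0 < ε₀ ≤ 1/2 and let b₀ be a positive integer such that ε₀·b₀ is an integer and b₀ ≥ (48/ε₀²)·log₂(2/ε₀). Set ε_i = ε₀/2^i and b_i = 4^i·b₀. Suppose (a_i)_{i≥1} is a sequence of reals in [0,1] satisfying a_1 ≤ ε_1⁴ and a_{i+1} ≤ C(b_i, ε_i·b_i)·a_i^{ε_i·b_i} for every i ≥ 1. Then for every integer L ≥ 2, a_L ≤ (ε_{L−1}/2)⁴, and moreover a_L ≤ 2^{−(L−1)·ε₀·b₀·2^{L−2}/5}. -/
/-!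
Write `x = ε₀ / 2 ^ i`, `n = 4 ^ i * b₀` and `K = k₀ * 2 ^ i = x * n`. The standard bound
`C(n, K) ≤ (e / x) ^ K` (`choose_mul_pow_le_three_pow`) turns the recursion into
`a (i + 1) ≤ (e * a i / x) ^ K`. If `a i ≤ x ^ 4`, then `e * x ≤ 1` (as `x ≤ 1 / 4` for `i ≥ 1`)
gives `a (i + 1) ≤ x ^ (2 * K)` (`stmt14_step`).
Since `K ≥ 4`, this is at most `(x / 2) ^ 4`, so the invariant `a i ≤ (ε₀ / 2 ^ i) ^ 4` propagates
(`stmt14_invariant`). Both conclusions follow from the step at `i = L - 1`, the second one because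
`x ≤ 2 ^ (-L)`, which leaves a lot of room in the exponent.
-/

/-- The estimate `C(n, K) ≤ (e / x) ^ K` for `K = x * n`, cleared of denominators and with `e`
rounded up to `3`. -/
lemma choose_mul_pow_le_three_pow (n K : ℕ) (x : ℝ) (hK : (K : ℝ) = x * n) (hx : 0 ≤ x) :
    (n.choose K : ℝ) * x ^ K ≤ 3 ^ K := by
  calc (n.choose K : ℝ) * x ^ K ≤ ((n : ℝ) ^ K / K.factorial) * x ^ K := by
        gcongr
        exact Nat.choose_le_pow_div K n
    _ = (K : ℝ) ^ K / K.factorial := by rw [hK, mul_pow]; ring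
    _ ≤ Real.exp K := Real.pow_div_factorial_le_exp _ (Nat.cast_nonneg K) K
    _ = Real.exp 1 ^ K := by rw [← Real.exp_nat_mul, mul_one]
    _ ≤ 3 ^ K := by
        gcongr
        linarith [Real.exp_one_lt_d9]

/-- One step of the recursion, with `s` and `t` the error probabilities at consecutive levels. -/
lemma stmt14_step (n K : ℕ) (x s t : ℝ) (hK : (K : ℝ) = x * n) (hx : 0 ≤ x) (hx' : x ≤ 1 / 4)
    (hs : 0 ≤ s) (hsx : s ≤ x ^ 4) (hrec : t ≤ (n.choose K : ℝ) * s ^ K) :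
    t ≤ (x ^ 2) ^ K := by
  calc t ≤ (n.choose K : ℝ) * s ^ K := hrec
    _ ≤ (n.choose K : ℝ) * (x ^ 4) ^ K := by gcongr
    _ = ((n.choose K : ℝ) * x ^ K) * (x ^ 3) ^ K := by
        rw [mul_assoc, ← mul_pow]; ring
    _ ≤ 3 ^ K * (x ^ 3) ^ K := by
        gcongr
        exact choose_mul_pow_le_three_pow n K x hK hx
    _ = (3 * x ^ 3) ^ K := by rw [mul_pow]
    _ ≤ (x ^ 2) ^ K := by
        gcongr
        nlinarith [sq_nonneg x]

lemma stmt14_invariant_step (x : ℝ) (K : ℕ) (hx : 0 ≤ x) (hx' : x ≤ 1 / 4) (hK : 4 ≤ K) :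
    (x ^ 2) ^ K ≤ (x / 2) ^ 4 := by
  calc (x ^ 2) ^ K ≤ (x ^ 2) ^ 4 := pow_le_pow_of_le_one (by positivity) (by nlinarith) hK
    _ ≤ (x / 2) ^ 4 := by
        gcongr
        nlinarith

lemma eps_div_two_pow_le (ε₀ : ℝ) (hε₀' : ε₀ ≤ 1 / 2) (i : ℕ) :
    ε₀ / 2 ^ i ≤ (1 / 2) ^ (i + 1) := by
  calc ε₀ / 2 ^ i ≤ (1 / 2) / 2 ^ i := by gcongr
    _ = (1 / 2) ^ (i + 1) := by rw [one_div_pow, pow_succ]; field_simp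

lemma eps_div_two_pow_le_quarter (ε₀ : ℝ) (hε₀' : ε₀ ≤ 1 / 2) (i : ℕ) (hi : 1 ≤ i) :
    ε₀ / 2 ^ i ≤ 1 / 4 := by
  calc ε₀ / 2 ^ i ≤ (1 / 2) ^ (i + 1) := eps_div_two_pow_le ε₀ hε₀' i
    _ ≤ (1 / 2) ^ 2 := pow_le_pow_of_le_one (by norm_num) (by norm_num) (by omega)
    _ = 1 / 4 := by norm_num

/-- The only consequence of the lower bound on `b₀` that the argument needs. -/
lemma two_le_of_big (ε₀ : ℝ) (hε₀ : 0 < ε₀) (hε₀' : ε₀ ≤ 1 / 2) (b₀ k₀ : ℕ)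
    (hk₀ : (k₀ : ℝ) = ε₀ * b₀)
    (hbig : (b₀ : ℝ) ≥ 48 / ε₀ ^ 2 * Real.logb 2 (2 / ε₀)) : 2 ≤ k₀ := by
  have hlog : 1 ≤ Real.logb 2 (2 / ε₀) := by
    rw [Real.le_logb_iff_rpow_le (by norm_num) (by positivity), Real.rpow_one,
      le_div_iff₀ hε₀]
    linarith
  have h1 : 48 / ε₀ ^ 2 ≤ (b₀ : ℝ) :=
    le_trans (le_mul_of_one_le_right (by positivity) hlog) hbig
  have h2 : (48 : ℝ) ≤ b₀ * ε₀ ^ 2 := by rwa [div_le_iff₀ (by positivity)] at h1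
  have h3 : (2 : ℝ) ≤ k₀ := by
    have : (0 : ℝ) ≤ k₀ := Nat.cast_nonneg _
    nlinarith
  exact_mod_cast h3

/-- The failure threshold `k₀ * 2 ^ i` is the fraction `ε₀ / 2 ^ i` of the
`4 ^ i * b₀` sub-blocks. -/
lemma threshold_eq (ε₀ : ℝ) (b₀ k₀ i : ℕ) (hk₀ : (k₀ : ℝ) = ε₀ * b₀) :
    ((k₀ * 2 ^ i : ℕ) : ℝ) = ε₀ / 2 ^ i * ((4 ^ i * b₀ : ℕ) : ℝ) := by
  push_cast
  rw [hk₀, show (4 : ℝ) ^ i = 2 ^ i * 2 ^ i by rw [← mul_pow]; norm_num]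
  field_simp

lemma stmt14_invariant (ε₀ : ℝ) (hε₀ : 0 < ε₀) (hε₀' : ε₀ ≤ 1 / 2) (b₀ k₀ : ℕ)
    (hk₀ : (k₀ : ℝ) = ε₀ * b₀) (hk : 2 ≤ k₀)
    (a : ℕ → ℝ) (ha : ∀ i, 1 ≤ i → 0 ≤ a i ∧ a i ≤ 1)
    (ha1 : a 1 ≤ (ε₀ / 2) ^ 4)
    (harec : ∀ i, 1 ≤ i →
      a (i + 1) ≤ (Nat.choose (4 ^ i * b₀) (k₀ * 2 ^ i) : ℝ) * a i ^ (k₀ * 2 ^ i))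
    (i : ℕ) (hi : 1 ≤ i) : a i ≤ (ε₀ / 2 ^ i) ^ 4 := by
  induction i, hi using Nat.le_induction with
  | base => simpa using ha1
  | succ i hi ih =>
    have hx : 0 ≤ ε₀ / 2 ^ i := by positivity
    have hx' := eps_div_two_pow_le_quarter ε₀ hε₀' i hi
    have h2i : 2 ≤ 2 ^ i := Nat.le_self_pow (by omega) 2
    calc a (i + 1) ≤ ((ε₀ / 2 ^ i) ^ 2) ^ (k₀ * 2 ^ i) :=
          stmt14_step _ _ _ _ _ (threshold_eq ε₀ b₀ k₀ i hk₀) hx hx' (ha i hi).1 ih (harec i hi)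
      _ ≤ (ε₀ / 2 ^ i / 2) ^ 4 := stmt14_invariant_step _ _ hx hx' (Nat.mul_le_mul hk h2i)
      _ = (ε₀ / 2 ^ (i + 1)) ^ 4 := by rw [pow_succ _ i, div_div]

theorem stmt14 (ε₀ : ℝ) (hε₀ : 0 < ε₀) (hε₀' : ε₀ ≤ 1/2)
    (b₀ : ℕ) (hb₀ : 0 < b₀)
    (k₀ : ℕ) (hk₀ : (k₀ : ℝ) = ε₀ * b₀)
    (hbig : (b₀ : ℝ) ≥ 48 / ε₀ ^ 2 * Real.logb 2 (2 / ε₀))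
    (a : ℕ → ℝ) (ha : ∀ i, 1 ≤ i → 0 ≤ a i ∧ a i ≤ 1)
    (ha1 : a 1 ≤ (ε₀ / 2) ^ 4)
    (harec : ∀ i, 1 ≤ i →
      a (i + 1) ≤ (Nat.choose (4 ^ i * b₀) (k₀ * 2 ^ i) : ℝ) * a i ^ (k₀ * 2 ^ i))
    (L : ℕ) (hL : 2 ≤ L) :
    a L ≤ (ε₀ / 2 ^ (L - 1) / 2) ^ 4 ∧
      a L ≤ (2 : ℝ) ^ (-(((L : ℝ) - 1) * ε₀ * (b₀ : ℝ) * 2 ^ (L - 2) / 5)) := by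
  have hinv := stmt14_invariant ε₀ hε₀ hε₀' b₀ k₀ hk₀
    (two_le_of_big ε₀ hε₀ hε₀' b₀ k₀ hk₀ hbig) a ha ha1 harec
  obtain ⟨j, rfl⟩ : ∃ j, L = j + 2 := ⟨L - 2, by omega⟩
  rw [show j + 2 - 1 = j + 1 by omega, show j + 2 - 2 = j by omega]
  constructor
  · have h := hinv (j + 2) (by omega)
    rwa [pow_succ _ (j + 1), ← div_div] at h
  · have hi : 1 ≤ j + 1 := by omega
    have hx : 0 ≤ ε₀ / 2 ^ (j + 1) := by positivity
    calc a (j + 2) ≤ ((ε₀ / 2 ^ (j + 1)) ^ 2) ^ (k₀ * 2 ^ (j + 1)) :=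
          stmt14_step _ _ _ _ _ (threshold_eq ε₀ b₀ k₀ (j + 1) hk₀) hx
            (eps_div_two_pow_le_quarter ε₀ hε₀' _ hi) (ha _ hi).1 (hinv _ hi) (harec _ hi)
      _ ≤ (((1 / 2) ^ (j + 2)) ^ 2) ^ (k₀ * 2 ^ (j + 1)) := by
          gcongr
          exact eps_div_two_pow_le ε₀ hε₀' (j + 1)
      _ = (2 : ℝ) ^ (-(((j + 2) * 2 * (k₀ * 2 ^ (j + 1)) : ℕ) : ℝ)) := by
          rw [Real.rpow_neg (by norm_num), Real.rpow_natCast, ← pow_mul, ← pow_mul,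
            one_div_pow, one_div, mul_assoc]
      _ ≤ _ := by
          apply Real.rpow_le_rpow_of_exponent_le (by norm_num)
          -- With `P = k₀ * 2 ^ j` the claim is `(j + 1) * P / 5 ≤ 4 * (j + 2) * P`.
          have hP : (0 : ℝ) ≤ k₀ * 2 ^ j := by positivity
          have hjP : (0 : ℝ) ≤ j * (k₀ * 2 ^ j) := by positivity
          rw [mul_assoc _ ε₀, ← hk₀]
          push_cast
          rw [pow_succ]
          nlinarith
end
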